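/- Define v : 2^{[4]} → ℝ by v(S) = min( |S ∩ {1,2,3}| + 2·[4 ∈ S], 2 ), i.e., the budget-additive function on four items where items 1, 2, 3 have value 1, item 4 has value 2, and the budget is 2. Then v is normalized, monotone, and submodular, but the discrete Hessian H^v_∅ of v at the empty set is not negative semidefinite: for z = (1,1,1,−1), z^T H^v_∅ z = 1 > 0. Consequently, v is not a matroid rank sum function. -/

import Mathlib

/-!
The values of `vBudget` are natural numbers, so its elementary properties and the entries of its
Hessian at `∅` are finite computations. For a matroid rank function `r`, the entry
`r{j,k} - r{j} - r{k}` of the Hessian at `∅` is `-1` if `j` and `k` are parallel nonloops (or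
`j = k` is a nonloop) and `0` otherwise. Parallelism is transitive, by submodularity of `r`, so
the quadratic form is minus a sum of squares, one for each parallel class. Only its value at
`(1, 1, 1, -1)` is needed, and there nonpositivity is a statement about bounded integers
(`matroidRank_quadForm_nonpos`). Since the Hessian is linear in the set function
(`quadForm_sum`), nonpositivity passes to nonnegative combinations of rank functions, whereas
`vBudget` gives the value `1`.
-/

open Finset Matrix
open scoped Classical

/-- The rank function of a matroid `M` on ground set `Fin m`: the maximum cardinality of an
independent set contained in `A`. -/
noncomputable def matroidRank {m : ℕ} (M : Matroid (Fin m)) (A : Finset (Fin m)) : ℕ :=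
  (A.powerset.filter (fun I : Finset (Fin m) => M.Indep (I : Set (Fin m)))).sup Finset.card

/-- The discrete Hessian matrix of a set function `v` at `S`:
`H^v_S(j,k) = v(S ∪ {j,k}) − v(S ∪ {j}) − v(S ∪ {k}) + v(S)`. -/
def discreteHessian {m : ℕ} (v : Finset (Fin m) → ℝ) (S : Finset (Fin m)) :
    Matrix (Fin m) (Fin m) ℝ :=
  Matrix.of fun j k => v (S ∪ {j, k}) - v (S ∪ {j}) - v (S ∪ {k}) + v S

/-- The budget-additive function on four items where items `0, 1, 2` have value `1`,
item `3` has value `2`, and the budget is `2`: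
`v(S) = min( |S ∩ {0,1,2}| + 2·[3 ∈ S], 2 )`. -/
noncomputable def vBudget (S : Finset (Fin 4)) : ℝ :=
  min (((S ∩ ({0, 1, 2} : Finset (Fin 4))).card : ℝ)
        + (if (3 : Fin 4) ∈ S then 2 else 0)) 2

/-- The maximum defining `matroidRank` agrees with Mathlib's extended rank. -/
lemma coe_matroidRank {m : ℕ} (M : Matroid (Fin m)) (A : Finset (Fin m)) :
    (matroidRank M A : ℕ∞) = M.eRk (A : Set (Fin m)) := by
  apply le_antisymm
  · obtain ⟨I, hI, h⟩ := Finset.exists_mem_eq_sup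
      (A.powerset.filter (fun I : Finset (Fin m) => M.Indep (I : Set (Fin m))))
      ⟨∅, by simp⟩ Finset.card
    rw [Finset.mem_filter, Finset.mem_powerset] at hI
    rw [matroidRank, h, ← Set.encard_coe_eq_coe_finsetCard, ← hI.2.eRk_eq_encard]
    exact M.eRk_mono (Finset.coe_subset.2 hI.1)
  · obtain ⟨I, hI⟩ := M.exists_isBasis' (A : Set (Fin m))
    have hc : ((I.toFinset : Finset (Fin m)) : Set (Fin m)) = I := Set.coe_toFinset I
    rw [← hI.encard_eq_eRk, ← hc, Set.encard_coe_eq_coe_finsetCard, Nat.cast_le]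
    refine Finset.le_sup (f := Finset.card) (Finset.mem_filter.2 ⟨?_, ?_⟩)
    · rw [Finset.mem_powerset, ← Finset.coe_subset, hc]
      exact hI.subset
    · rw [hc]
      exact hI.indep

lemma matroidRank_mono {m : ℕ} (M : Matroid (Fin m)) {A B : Finset (Fin m)} (h : A ⊆ B) :
    matroidRank M A ≤ matroidRank M B := by
  rw [← Nat.cast_le (α := ℕ∞), coe_matroidRank, coe_matroidRank]
  exact M.eRk_mono (Finset.coe_subset.2 h)

lemma matroidRank_le_card {m : ℕ} (M : Matroid (Fin m)) (A : Finset (Fin m)) :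
    matroidRank M A ≤ A.card := by
  rw [← Nat.cast_le (α := ℕ∞), coe_matroidRank, ← Set.encard_coe_eq_coe_finsetCard]
  exact M.eRk_le_encard _

lemma matroidRank_submod {m : ℕ} (M : Matroid (Fin m)) (A B : Finset (Fin m)) :
    matroidRank M (A ∩ B) + matroidRank M (A ∪ B) ≤ matroidRank M A + matroidRank M B := by
  rw [← Nat.cast_le (α := ℕ∞)]
  push_cast
  simp only [coe_matroidRank, Finset.coe_inter, Finset.coe_union]
  exact M.eRk_inter_add_eRk_union_le _ _

/-- The quadratic form of the Hessian at `∅`, evaluated at `(1, 1, 1, -1)`. -/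
lemma quadForm_eq (v : Finset (Fin 4) → ℝ) :
    (![1, 1, 1, -1] : Fin 4 → ℝ) ⬝ᵥ (discreteHessian v ∅ *ᵥ (![1, 1, 1, -1] : Fin 4 → ℝ))
      = 4 * v ∅ - 3 * (v {0} + v {1} + v {2}) + 5 * v {3}
        + 2 * (v {0, 1} + v {0, 2} + v {1, 2}) - 2 * (v {0, 3} + v {1, 3} + v {2, 3}) := by
  simp only [discreteHessian, dotProduct, mulVec, Fin.sum_univ_four, Matrix.of_apply,
    Finset.empty_union, Finset.pair_eq_singleton]
  simp only [Finset.pair_comm (1 : Fin 4) 0, Finset.pair_comm (2 : Fin 4) 0,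
    Finset.pair_comm (3 : Fin 4) 0, Finset.pair_comm (2 : Fin 4) 1,
    Finset.pair_comm (3 : Fin 4) 1, Finset.pair_comm (3 : Fin 4) 2]
  simp
  ring

lemma quadForm_sum {m κ : ℕ} (w : Fin κ → ℝ) (r : Fin κ → Finset (Fin m) → ℝ)
    (S : Finset (Fin m)) (z : Fin m → ℝ) :
    z ⬝ᵥ (discreteHessian (fun A => ∑ l, w l * r l A) S *ᵥ z)
      = ∑ l, w l * (z ⬝ᵥ (discreteHessian (r l) S *ᵥ z)) := by
  have h : discreteHessian (fun A => ∑ l, w l * r l A) S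
      = ∑ l, w l • discreteHessian (r l) S := by
    ext j k
    simp only [discreteHessian, Matrix.of_apply, Matrix.sum_apply, Matrix.smul_apply,
      smul_eq_mul, mul_add, mul_sub, Finset.sum_add_distrib, Finset.sum_sub_distrib]
  simp only [h, Matrix.sum_mulVec, dotProduct_sum, Matrix.smul_mulVec, dotProduct_smul,
    smul_eq_mul]

lemma matroidRank_quadForm_nonpos (M : Matroid (Fin 4)) :
    (![1, 1, 1, -1] : Fin 4 → ℝ) ⬝ᵥ
      (discreteHessian (fun A => (matroidRank M A : ℝ)) ∅ *ᵥ (![1, 1, 1, -1] : Fin 4 → ℝ))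
      ≤ 0 := by
  rw [quadForm_eq]
  have h0 : matroidRank M ∅ = 0 := by simpa using matroidRank_le_card M ∅
  have h1 (i : Fin 4) : matroidRank M {i} ≤ 1 := by simpa using matroidRank_le_card M {i}
  have hl (i j : Fin 4) : matroidRank M {i} ≤ matroidRank M {i, j} :=
    matroidRank_mono M (by simp)
  have hr (i j : Fin 4) : matroidRank M {j} ≤ matroidRank M {i, j} :=
    matroidRank_mono M (by simp)
  have hp (i j : Fin 4) :
      matroidRank M {i, j} ≤ matroidRank M {i} + matroidRank M {j} := by
    have h := matroidRank_submod M {i} {j}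
    rw [← Finset.insert_eq] at h
    omega
  -- If `i` and `j` are both parallel to `3`, then they are parallel to each other.
  have ht (i j : Fin 4) :
      matroidRank M {3} + matroidRank M {i, j} ≤ matroidRank M {i, 3} + matroidRank M {j, 3} := by
    have h := matroidRank_submod M {i, 3} {j, 3}
    have a := matroidRank_mono M (show ({3} : Finset (Fin 4)) ⊆ {i, 3} ∩ {j, 3} by simp)
    have b := matroidRank_mono M (show ({i, j} : Finset (Fin 4)) ⊆ {i, 3} ∪ {j, 3} by
      simp [Finset.insert_subset_iff])
    omega
  have key : 5 * matroidRank M {3}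
        + 2 * (matroidRank M {0, 1} + matroidRank M {0, 2} + matroidRank M {1, 2})
      ≤ 3 * (matroidRank M {0} + matroidRank M {1} + matroidRank M {2})
        + 2 * (matroidRank M {0, 3} + matroidRank M {1, 3} + matroidRank M {2, 3}) := by
    have := h1 0; have := h1 1; have := h1 2; have := h1 3
    have := hl 0 3; have := hl 1 3; have := hl 2 3
    have := hr 0 3; have := hr 1 3; have := hr 2 3
    have := hp 0 1; have := hp 0 2; have := hp 1 2
    have := ht 0 1; have := ht 0 2; have := ht 1 2
    omega
  have key' := (Nat.cast_le (α := ℝ)).2 key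
  push_cast at key'
  rw [h0]
  push_cast
  linarith

lemma vBudget_eq_natCast (S : Finset (Fin 4)) :
    vBudget S = ((min ((S ∩ {0, 1, 2}).card + (if 3 ∈ S then 2 else 0)) 2 : ℕ) : ℝ) := by
  simp [vBudget]

/-- `vBudget` is normalized, monotone and submodular, but its discrete Hessian at `∅` is
not negative semidefinite (with `z = (1,1,1,−1)` we get `zᵀ H^v_∅ z = 1 > 0`), and
consequently `vBudget` is not a matroid rank sum function. -/
theorem vBudget_not_matroidRankSum :
    vBudget ∅ = 0
    ∧ (∀ A B : Finset (Fin 4), A ⊆ B → vBudget A ≤ vBudget B)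
    ∧ (∀ A B : Finset (Fin 4),
        vBudget A + vBudget B ≥ vBudget (A ∪ B) + vBudget (A ∩ B))
    ∧ (![1, 1, 1, -1] : Fin 4 → ℝ) ⬝ᵥ
        (discreteHessian vBudget ∅ *ᵥ (![1, 1, 1, -1] : Fin 4 → ℝ)) = 1
    ∧ ¬(∀ z : Fin 4 → ℝ, z ⬝ᵥ (discreteHessian vBudget ∅ *ᵥ z) ≤ 0)
    ∧ ¬∃ (κ : ℕ) (w : Fin κ → ℝ) (M : Fin κ → Matroid (Fin 4)),
        (∀ l, 0 ≤ w l) ∧ (∀ l, (M l).E = Set.univ) ∧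
        ∀ S : Finset (Fin 4), vBudget S = ∑ l, w l * (matroidRank (M l) S : ℝ) := by
  have hQ : (![1, 1, 1, -1] : Fin 4 → ℝ) ⬝ᵥ
      (discreteHessian vBudget ∅ *ᵥ (![1, 1, 1, -1] : Fin 4 → ℝ)) = 1 := by
    have e : vBudget ∅ = (0 : ℕ) ∧ vBudget {0} = (1 : ℕ) ∧ vBudget {1} = (1 : ℕ)
        ∧ vBudget {2} = (1 : ℕ) ∧ vBudget {3} = (2 : ℕ) ∧ vBudget {0, 1} = (2 : ℕ)
        ∧ vBudget {0, 2} = (2 : ℕ) ∧ vBudget {1, 2} = (2 : ℕ) ∧ vBudget {0, 3} = (2 : ℕ)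
        ∧ vBudget {1, 3} = (2 : ℕ) ∧ vBudget {2, 3} = (2 : ℕ) := by
      simp only [vBudget_eq_natCast, Nat.cast_inj]
      decide
    obtain ⟨e, e0, e1, e2, e3, e01, e02, e12, e03, e13, e23⟩ := e
    rw [quadForm_eq, e, e0, e1, e2, e3, e01, e02, e12, e03, e13, e23]
    norm_num
  refine ⟨by simp [vBudget], ?_, ?_, hQ, fun h => ?_, ?_⟩
  · simp only [vBudget_eq_natCast, Nat.cast_le]
    decide +kernel
  · simp only [vBudget_eq_natCast, ge_iff_le, ← Nat.cast_add, Nat.cast_le]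
    decide +kernel
  · have := h ![1, 1, 1, -1]
    linarith
  · rintro ⟨κ, w, M, hw, -, hv⟩
    rw [funext hv, quadForm_sum w (fun l A => (matroidRank (M l) A : ℝ))] at hQ
    have : ∑ l, w l * _ ≤ 0 := Finset.sum_nonpos fun l _ =>
      mul_nonpos_of_nonneg_of_nonpos (hw l) (matroidRank_quadForm_nonpos (M l))
    linarith
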